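/- For every $n \geq 3$, the generalized quaternion group $Q_{2^n}$ of order $2^n$ satisfies $S(Q_{2^n}) = (n+4) \cdot 2^{n-2}$. -/

import Mathlib

/-- For a finite group `G`, `phiG G` is the number of elements of `G` whose order
equals the exponent of `G` (a group-theoretic generalization of Euler's totient). -/
noncomputable def phiG (G : Type*) [Group G] : ℕ :=
  Nat.card {a : G // orderOf a = Monoid.exponent G}

/-- `SG G` is the sum of `phiG H` over all subgroups `H` of `G`. -/
noncomputable def SG (G : Type*) [Group G] : ℕ :=
  ∑ᶠ H : Subgroup G, phiG H

/-!
In any finite group every element generates exactly one cyclic subgroup, so the cyclic subgroups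
together contribute `|G|` to `SG G`. In the generalized quaternion group of order `4N` the
non-cyclic subgroups are the `⟨a ^ d, x a ^ s⟩` with `d` a proper divisor of `N` and `s < d`, and
each of them is isomorphic to the generalized quaternion group of order `4(N / d)`. Hence
`SG Q_{4N} = 4N + ∑ d * phiG Q_{4N / d}` over the proper divisors `d` of `N`. For `N = 2 ^ (L + 1)`
the divisors `2 ^ j` with `j < L` contribute `N` each, and `2 ^ L` contributes `6 * 2 ^ L = 3N`
because all six elements of order four of `Q_8` are counted.
-/

section FiniteGroup

variable {G G' : Type*} [Group G] [Group G']

theorem phiG_congr (e : G ≃* G') : phiG G = phiG G' :=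
  Nat.card_congr <| e.toEquiv.subtypeEquiv fun g => by
    simp [← Monoid.exponent_eq_of_mulEquiv e]

theorem phiG_eq_card_zpowers_eq (H : Subgroup G) [Finite H] [IsCyclic H] :
    phiG H = Nat.card {g : G // Subgroup.zpowers g = H} := by
  refine Nat.card_congr ⟨fun g => ⟨g.1, ?_⟩, fun g => ⟨⟨g.1, ?_⟩, ?_⟩, fun _ => rfl, fun _ => rfl⟩
  · refine Subgroup.eq_of_le_of_card_ge (Subgroup.zpowers_le.2 g.1.2) ?_
    rw [Nat.card_zpowers, Subgroup.orderOf_coe, g.2, IsCyclic.exponent_eq_card]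
  · exact g.2.le (Subgroup.mem_zpowers g.1)
  · rw [Subgroup.orderOf_mk, IsCyclic.exponent_eq_card, ← Nat.card_zpowers, g.2]

variable (G) in
theorem finsum_phiG_isCyclic [Finite G] :
    ∑ᶠ H ∈ {H : Subgroup G | IsCyclic H}, phiG H = Nat.card G := by
  classical
  have := Fintype.ofFinite G
  rw [finsum_mem_eq_toFinset_sum, Nat.card_eq_fintype_card, ← Finset.card_univ,
    Finset.card_eq_sum_card_fiberwise (f := Subgroup.zpowers)
      (t := {H : Subgroup G | IsCyclic H}.toFinset)
      fun g _ => by simpa using Subgroup.isCyclic_zpowers g]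
  refine Finset.sum_congr rfl fun H hH => ?_
  have : IsCyclic H := by simpa using hH
  rw [phiG_eq_card_zpowers_eq, Nat.card_eq_fintype_card, Fintype.card_subtype]

variable (G) in
theorem SG_eq_card_add_finsum_not_isCyclic [Finite G] :
    SG G = Nat.card G + ∑ᶠ H ∈ {H : Subgroup G | ¬ IsCyclic H}, phiG H := by
  rw [← finsum_phiG_isCyclic, SG, ← finsum_mem_univ,
    ← Set.union_compl_self {H : Subgroup G | IsCyclic H},
    finsum_mem_union disjoint_compl_right (Set.toFinite _) (Set.toFinite _), Set.compl_ofPred]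

end FiniteGroup

section ZModScaling

variable {M : ℕ}

theorem zmod_natCast_dvd_intCast_iff {d : ℕ} (h : d ∣ M) (k : ℤ) :
    (d : ZMod M) ∣ (k : ZMod M) ↔ (d : ℤ) ∣ k := by
  refine ⟨fun hk => ?_, fun hk => by simpa using (Int.castRingHom (ZMod M)).map_dvd hk⟩
  have hcast := (ZMod.castHom h (ZMod d)).map_dvd hk
  simpa [zero_dvd_iff, ZMod.intCast_zmod_eq_zero_iff_dvd] using hcast

theorem zmod_natCast_dvd_natCast_iff {d : ℕ} (h : d ∣ M) (k : ℕ) :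
    (d : ZMod M) ∣ (k : ZMod M) ↔ d ∣ k := by
  simpa [Int.natCast_dvd_natCast] using zmod_natCast_dvd_intCast_iff h k

theorem exists_dvd_forall_mem_addSubgroup_zmod_iff (K : AddSubgroup (ZMod M)) :
    ∃ d, d ∣ M ∧ ∀ i, i ∈ K ↔ (d : ZMod M) ∣ i := by
  obtain ⟨g, hg⟩ := Int.subgroup_cyclic (K.comap (Int.castAddHom (ZMod M)))
  rw [← AddSubgroup.zmultiples_eq_closure] at hg
  have mem_iff (k : ℤ) : (k : ZMod M) ∈ K ↔ (g.natAbs : ℤ) ∣ k := by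
    rw [Int.natAbs_dvd, ← Int.mem_zmultiples_iff, ← hg]
    rfl
  have hdvd : g.natAbs ∣ M := Int.natCast_dvd_natCast.1 ((mem_iff M).1 (by simp))
  refine ⟨g.natAbs, hdvd, fun i => ?_⟩
  obtain ⟨k, rfl⟩ := ZMod.intCast_surjective i
  rw [mem_iff, zmod_natCast_dvd_intCast_iff hdvd]

/-- Multiplication by `d`, as a homomorphism `ZMod k →+ ZMod M`; it is well defined when
`M ∣ d * k`. -/
def zmodScale {d k : ℕ} (h : M ∣ d * k) : ZMod k →+ ZMod M :=
  ZMod.lift k ⟨(AddMonoidHom.mulLeft (d : ZMod M)).comp (Int.castAddHom (ZMod M)), by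
    simpa using mod_cast (ZMod.natCast_eq_zero_iff _ _).2 h⟩

theorem zmodScale_intCast {d k : ℕ} (h : M ∣ d * k) (i : ℤ) : zmodScale h i = d * i := by
  simp [zmodScale]

theorem zmodScale_natCast {d k : ℕ} (h : M ∣ d * k) (i : ℕ) : zmodScale h i = d * i := by
  simpa using zmodScale_intCast h i

theorem zmodScale_injective {d k : ℕ} (hd : d ≠ 0) (h : M = d * k) :
    Function.Injective (zmodScale h.dvd) := by
  refine (ZMod.lift_injective _).2 fun i hi => ?_
  have hdvd : ((d * k : ℕ) : ℤ) ∣ d * i := by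
    rw [← h, ← ZMod.intCast_zmod_eq_zero_iff_dvd]
    simpa using hi
  rw [Nat.cast_mul, mul_dvd_mul_iff_left (by exact_mod_cast hd)] at hdvd
  exact (ZMod.intCast_zmod_eq_zero_iff_dvd _ _).2 hdvd

theorem exists_zmodScale_eq_iff {d k : ℕ} (h : M ∣ d * k) (j : ZMod M) :
    (∃ i, zmodScale h i = j) ↔ (d : ZMod M) ∣ j := by
  constructor
  · rintro ⟨i, rfl⟩
    obtain ⟨i, rfl⟩ := ZMod.intCast_surjective i
    exact ⟨i, zmodScale_intCast h i⟩
  · rintro ⟨c, rfl⟩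
    obtain ⟨c, rfl⟩ := ZMod.intCast_surjective c
    exact ⟨c, zmodScale_intCast h c⟩

end ZModScaling

section GeneralizedQuaternion

open QuaternionGroup

variable {N : ℕ}

/-- A generalized quaternion group as the disjoint union of the cyclic subgroup of its rotations
`a i` and the coset of the elements `xa i`. -/
def quaternionGroupEquivSum : QuaternionGroup N ≃ ZMod (2 * N) ⊕ ZMod (2 * N) where
  toFun
    | a i => .inl i
    | xa i => .inr i
  invFun := Sum.elim a xa
  left_inv := by rintro (i | i) <;> rfl
  right_inv := by rintro (i | i) <;> rfl

theorem card_quaternionGroup_subtype [NeZero N] (p : QuaternionGroup N → Prop) :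
    Nat.card {g // p g} = Nat.card {i // p (a i)} + Nat.card {i // p (xa i)} := by
  rw [← Nat.card_sum]
  exact Nat.card_congr <| (quaternionGroupEquivSum.symm.subtypeEquivOfSubtype).symm.trans
    Equiv.subtypeSum

/-- The inclusion of the rotations `a i` into a generalized quaternion group. -/
def rotationHom (N : ℕ) : Multiplicative (ZMod (2 * N)) →* QuaternionGroup N where
  toFun i := a i.toAdd
  map_one' := rfl
  map_mul' _ _ := rfl

theorem orderOf_a_eq_addOrderOf (i : ZMod (2 * N)) : orderOf (a i) = addOrderOf i :=
  (orderOf_injective (rotationHom N) (fun _ _ h => a.inj h) (.ofAdd i)).trans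
    (orderOf_ofAdd_eq_addOrderOf i)

theorem isCyclic_quaternionGroup_iff : IsCyclic (QuaternionGroup N) ↔ N = 1 := by
  refine ⟨fun h => ?_, by rintro rfl; exact quaternionGroup_one_isCyclic⟩
  have hcomm : (a 1 * xa 0 : QuaternionGroup N) = xa 0 * a 1 :=
    IsCyclic.isMulCommutative.is_comm.comm _ _
  have htwo : ((2 : ℕ) : ZMod (2 * N)) = 0 := by
    have hneg : (0 - 1 : ZMod (2 * N)) = 0 + 1 := xa.inj hcomm
    push_cast
    linear_combination -hneg
  rw [ZMod.natCast_eq_zero_iff] at htwo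
  exact Nat.dvd_one.1 (Nat.dvd_of_mul_dvd_mul_left two_pos htwo)

theorem phiG_quaternionGroup_of_even [NeZero N] (hN : Even N) :
    phiG (QuaternionGroup N) = (2 * N).totient + if N = 2 then 4 else 0 := by
  have hexp : Monoid.exponent (QuaternionGroup N) = 2 * N := by
    rw [exponent, lcm_eq_nat_lcm, Nat.lcm_eq_left hN.two_dvd]
  have hrot : Nat.card {i : ZMod (2 * N) // addOrderOf i = 2 * N} = (2 * N).totient := by
    rw [Nat.card_eq_fintype_card, Fintype.card_subtype]
    exact IsAddCyclic.card_addOrderOf_eq_totient (by rw [ZMod.card])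
  rw [phiG, card_quaternionGroup_subtype, hexp]
  simp only [orderOf_a_eq_addOrderOf, orderOf_xa, hrot]
  split_ifs with h
  · subst h
    simp
  · have hN4 : 4 ≠ 2 * N := by omega
    simp [hN4]

theorem xa_mem_iff_of_xa_mem {H : Subgroup (QuaternionGroup N)} {i j : ZMod (2 * N)}
    (hi : xa i ∈ H) : xa j ∈ H ↔ a (j - i) ∈ H := by
  have hj : xa j = xa i * a (j - i) := by simp
  rw [hj, mul_mem_cancel_left hi]

theorem a_mem_zpowers_a_one (i : ZMod (2 * N)) : a i ∈ Subgroup.zpowers (a 1) := by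
  obtain ⟨k, rfl⟩ := ZMod.intCast_surjective i
  refine ⟨k, ((rotationHom N).map_zpow (.ofAdd 1) k).symm.trans ?_⟩
  rw [← ofAdd_zsmul, zsmul_one]
  rfl

theorem closure_a_one_xa_zero :
    Subgroup.closure {a 1, xa 0} = (⊤ : Subgroup (QuaternionGroup N)) := by
  have hrot (i : ZMod (2 * N)) : a i ∈ Subgroup.closure {a 1, xa 0} :=
    Subgroup.zpowers_le.2 (Subgroup.subset_closure (by simp)) (a_mem_zpowers_a_one i)
  refine eq_top_iff.2 ?_
  rintro (i | i) -
  · exact hrot i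
  · exact (xa_mem_iff_of_xa_mem (i := 0) (Subgroup.subset_closure (by simp))).2 (hrot _)

/-- The subgroup `⟨a ^ d, x a ^ s⟩` of the generalized quaternion group of order `4 * N`. For
`d ∣ N` it is a generalized quaternion group of order `4 * (N / d)`. -/
def dicyclicSubgroup (N d s : ℕ) : Subgroup (QuaternionGroup N) :=
  Subgroup.closure {a d, xa s}

/-- The homomorphism from the generalized quaternion group of order `4 * m` to the one of order
`4 * (d * m)` with `a ↦ a ^ d` and `x ↦ x a ^ s`. -/
def dicyclicHom (d m : ℕ) (s : ZMod (2 * (d * m))) :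
    QuaternionGroup m →* QuaternionGroup (d * m) :=
  have h : 2 * (d * m) ∣ d * (2 * m) := (mul_left_comm 2 d m).dvd
  MonoidHom.mk' (fun
      | a i => a (zmodScale h i)
      | xa i => xa (s + zmodScale h i)) <| by
    rintro (i | i) (j | j)
    · simp
    · simp [add_sub_assoc]
    · simp [add_assoc]
    · simp only [xa_mul_xa, map_add, map_sub, zmodScale_natCast, Nat.cast_mul, a.injEq]
      ring

theorem dicyclicHom_injective {d m : ℕ} (hd : d ≠ 0) (s : ZMod (2 * (d * m))) :
    Function.Injective (dicyclicHom d m s) := by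
  have hscale := zmodScale_injective hd (mul_left_comm 2 d m)
  rintro (i | i) (j | j) hij
  · exact congrArg a (hscale (a.inj hij))
  · cases hij
  · cases hij
  · exact congrArg xa (hscale (add_left_cancel (xa.inj hij)))

theorem range_dicyclicHom (d m s : ℕ) :
    (dicyclicHom d m s).range = dicyclicSubgroup (d * m) d s := by
  have ha : dicyclicHom d m s (a 1) = a d :=
    congrArg a (by simpa using zmodScale_natCast (mul_left_comm 2 d m).dvd 1)
  have hxa : dicyclicHom d m s (xa 0) = xa s :=
    congrArg xa (by simp)
  rw [MonoidHom.range_eq_map, ← closure_a_one_xa_zero, MonoidHom.map_closure, Set.image_pair, ha,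
    hxa, dicyclicSubgroup]

section Divisor

variable {d : ℕ}

theorem a_mem_dicyclicSubgroup_iff (hd : d ∣ N) (s : ℕ) (j : ZMod (2 * N)) :
    a j ∈ dicyclicSubgroup N d s ↔ (d : ZMod (2 * N)) ∣ j := by
  obtain ⟨m, rfl⟩ := hd
  rw [← range_dicyclicHom, ← exists_zmodScale_eq_iff (mul_left_comm 2 d m).dvd]
  constructor
  · rintro ⟨i | i, hi⟩
    · exact ⟨i, a.inj hi⟩
    · cases hi
  · rintro ⟨i, rfl⟩
    exact ⟨a i, rfl⟩

theorem xa_mem_dicyclicSubgroup_iff (hd : d ∣ N) (s : ℕ) (j : ZMod (2 * N)) :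
    xa j ∈ dicyclicSubgroup N d s ↔ (d : ZMod (2 * N)) ∣ j - s := by
  have hxa : xa (s : ZMod (2 * N)) ∈ dicyclicSubgroup N d s := Subgroup.subset_closure (by simp)
  rw [xa_mem_iff_of_xa_mem hxa, a_mem_dicyclicSubgroup_iff hd]

theorem nonempty_mulEquiv_dicyclicSubgroup [NeZero N] (hd : d ∣ N) (s : ℕ) :
    Nonempty (QuaternionGroup (N / d) ≃* dicyclicSubgroup N d s) := by
  have hd0 : d ≠ 0 := ne_zero_of_dvd_ne_zero (NeZero.ne N) hd
  obtain ⟨m, rfl⟩ := hd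
  rw [Nat.mul_div_cancel_left m hd0.bot_lt, ← range_dicyclicHom]
  exact ⟨MonoidHom.ofInjective (dicyclicHom_injective hd0 _)⟩

theorem isCyclic_dicyclicSubgroup_iff [NeZero N] (hd : d ∣ N) (s : ℕ) :
    IsCyclic (dicyclicSubgroup N d s) ↔ d = N := by
  obtain ⟨e⟩ := nonempty_mulEquiv_dicyclicSubgroup hd s
  rw [← e.isCyclic, isCyclic_quaternionGroup_iff, Nat.div_eq_iff_eq_mul_left, one_mul, eq_comm]
  exacts [Nat.pos_of_dvd_of_pos hd (NeZero.pos N), hd]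

theorem phiG_dicyclicSubgroup [NeZero N] (hd : d ∣ N) (s : ℕ) :
    phiG (dicyclicSubgroup N d s) = phiG (QuaternionGroup (N / d)) :=
  (nonempty_mulEquiv_dicyclicSubgroup hd s).elim fun e => (phiG_congr e).symm

end Divisor

theorem dicyclicSubgroup_inj {d d' s s' : ℕ} (hd : d ∣ N) (hd' : d' ∣ N) (hs : s < d)
    (hs' : s' < d') : dicyclicSubgroup N d s = dicyclicSubgroup N d' s' ↔ d = d' ∧ s = s' := by
  refine ⟨fun h => ?_, by rintro ⟨rfl, rfl⟩; rfl⟩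
  have hdvd (k : ℕ) : d ∣ k ↔ d' ∣ k := by
    rw [← zmod_natCast_dvd_natCast_iff (hd.mul_left 2),
      ← zmod_natCast_dvd_natCast_iff (hd'.mul_left 2), ← a_mem_dicyclicSubgroup_iff hd s,
      ← a_mem_dicyclicSubgroup_iff hd' s', h]
  obtain rfl : d = d' := Nat.dvd_antisymm ((hdvd d').2 dvd_rfl) ((hdvd d).1 dvd_rfl)
  have hmem : xa (s : ZMod (2 * N)) ∈ dicyclicSubgroup N d s' :=
    h ▸ Subgroup.subset_closure (by simp)
  have hmod : s' ≡ s [MOD d] := by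
    rw [Nat.modEq_iff_dvd, ← zmod_natCast_dvd_intCast_iff (hd.mul_left 2)]
    simpa using (xa_mem_dicyclicSubgroup_iff hd s' _).1 hmem
  exact ⟨rfl, (hmod.eq_of_lt_of_lt hs' hs).symm⟩

theorem exists_xa_mem_of_not_isCyclic {H : Subgroup (QuaternionGroup N)} (hH : ¬ IsCyclic H) :
    ∃ i, xa i ∈ H := by
  by_contra! hxa
  refine hH (Subgroup.isCyclic_of_le (H' := Subgroup.zpowers (a 1)) ?_)
  rintro (i | i) hi
  · exact a_mem_zpowers_a_one i
  · exact absurd hi (hxa i)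

theorem exists_eq_dicyclicSubgroup_of_not_isCyclic [NeZero N] {H : Subgroup (QuaternionGroup N)}
    (hH : ¬ IsCyclic H) : ∃ d ∈ N.properDivisors, ∃ s < d, H = dicyclicSubgroup N d s := by
  obtain ⟨i, hi⟩ := exists_xa_mem_of_not_isCyclic hH
  obtain ⟨d, hd2, hrot⟩ := exists_dvd_forall_mem_addSubgroup_zmod_iff
    (H.comap (rotationHom N)).toAddSubgroup'
  replace hrot (j : ZMod (2 * N)) : a j ∈ H ↔ (d : ZMod (2 * N)) ∣ j := hrot j
  have hd : d ∣ N := by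
    rw [← zmod_natCast_dvd_natCast_iff hd2, ← hrot, ← xa_sq i]
    exact pow_mem hi 2
  have hH_eq : H = dicyclicSubgroup N d (i.val % d) := by
    have hs : (d : ZMod (2 * N)) ∣ i - (i.val % d : ℕ) := ⟨(i.val / d : ℕ), by
      rw [sub_eq_iff_eq_add, ← Nat.cast_mul, ← Nat.cast_add, Nat.div_add_mod,
        ZMod.natCast_zmod_val]⟩
    ext (j | j)
    · rw [hrot, a_mem_dicyclicSubgroup_iff hd]
    · rw [xa_mem_dicyclicSubgroup_iff hd, xa_mem_iff_of_xa_mem hi, hrot, ← dvd_add_left hs,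
        sub_add_sub_cancel]
  refine ⟨d, Nat.mem_properDivisors.2 ⟨hd, lt_of_le_of_ne (Nat.le_of_dvd (NeZero.pos N) hd) ?_⟩,
    i.val % d, Nat.mod_lt _ (Nat.pos_of_dvd_of_pos hd (NeZero.pos N)), hH_eq⟩
  rwa [hH_eq, isCyclic_dicyclicSubgroup_iff hd] at hH

theorem bijOn_dicyclicSubgroup (N : ℕ) [NeZero N] :
    Set.BijOn (fun p : (_ : ℕ) × ℕ => dicyclicSubgroup N p.1 p.2)
      (N.properDivisors.sigma fun d => Finset.range d) {H | ¬ IsCyclic H} := by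
  refine ⟨?_, ?_, ?_⟩
  · rintro ⟨d, s⟩ h
    simp only [Finset.mem_coe, Finset.mem_sigma, Nat.mem_properDivisors] at h
    exact (isCyclic_dicyclicSubgroup_iff h.1.1 s).not.2 h.1.2.ne
  · rintro ⟨d, s⟩ h ⟨d', s'⟩ h' heq
    simp only [Finset.mem_coe, Finset.mem_sigma, Nat.mem_properDivisors, Finset.mem_range] at h h'
    obtain ⟨rfl, rfl⟩ := (dicyclicSubgroup_inj h.1.1 h'.1.1 h.2 h'.2).1 heq
    rfl
  · intro H hH
    obtain ⟨d, hd, s, hs, rfl⟩ := exists_eq_dicyclicSubgroup_of_not_isCyclic hH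
    exact ⟨⟨d, s⟩, Finset.mem_sigma.2 ⟨hd, Finset.mem_range.2 hs⟩, rfl⟩

theorem SG_quaternionGroup (N : ℕ) [NeZero N] :
    SG (QuaternionGroup N) =
      4 * N + ∑ d ∈ N.properDivisors, d * phiG (QuaternionGroup (N / d)) := by
  have hnoncyclic : ∑ᶠ H ∈ {H : Subgroup (QuaternionGroup N) | ¬ IsCyclic H}, phiG H =
      ∑ d ∈ N.properDivisors, d * phiG (QuaternionGroup (N / d)) := by
    rw [← finsum_mem_eq_of_bijOn _ (bijOn_dicyclicSubgroup N) fun _ _ => rfl, finsum_mem_coe_finset,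
      Finset.sum_sigma]
    refine Finset.sum_congr rfl fun d hd => ?_
    simp [phiG_dicyclicSubgroup (Nat.mem_properDivisors.1 hd).1]
  rw [SG_eq_card_add_finsum_not_isCyclic, hnoncyclic, Nat.card_eq_fintype_card,
    QuaternionGroup.card]

theorem phiG_quaternionGroup_two : phiG (QuaternionGroup 2) = 6 := by
  rw [phiG_quaternionGroup_of_even even_two]
  decide

theorem phiG_quaternionGroup_two_pow {k : ℕ} (hk : 2 ≤ k) :
    phiG (QuaternionGroup (2 ^ k)) = 2 ^ k := by
  have hk2 : 2 ^ k ≠ 2 := (Nat.pow_lt_pow_right one_lt_two hk).ne'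
  rw [phiG_quaternionGroup_of_even (even_two.pow_of_ne_zero (by omega)), if_neg hk2, ← pow_succ',
    Nat.totient_prime_pow_succ Nat.prime_two]
  simp

end GeneralizedQuaternion

theorem stmt_9 (n : ℕ) (hn : 3 ≤ n) :
    SG (QuaternionGroup (2 ^ (n - 2))) = (n + 4) * 2 ^ (n - 2) := by
  obtain ⟨L, rfl⟩ := Nat.exists_eq_add_of_le' hn
  change SG (QuaternionGroup (2 ^ (L + 1))) = (L + 3 + 4) * 2 ^ (L + 1)
  have hlarge : ∀ j ∈ Finset.range L,
      2 ^ j * phiG (QuaternionGroup (2 ^ (L + 1) / 2 ^ j)) = 2 ^ (L + 1) := fun j hj => by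
    rw [Finset.mem_range] at hj
    rw [Nat.pow_div (by omega) two_pos, phiG_quaternionGroup_two_pow (by omega),
      pow_mul_pow_sub 2 (by omega)]
  have hQ8 : 2 ^ L * phiG (QuaternionGroup (2 ^ (L + 1) / 2 ^ L)) = 3 * 2 ^ (L + 1) := by
    rw [Nat.pow_div (by omega) two_pos, Nat.add_sub_cancel_left, pow_one, phiG_quaternionGroup_two]
    ring
  rw [SG_quaternionGroup, Nat.sum_properDivisors_prime_nsmul Nat.prime_two, Finset.sum_range_succ,
    Finset.sum_congr rfl hlarge, hQ8, Finset.sum_const, Finset.card_range, smul_eq_mul]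
  ring
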